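/- Let p > 7 be a prime, and assume the numbers log Γ(a/p) for 1 ≤ a ≤ p-1 are Q̄-linearly independent. Then at least (p-7)/2 of the numbers γ_1(a,p), 1 ≤ a ≤ p-1, are transcendental, where γ_1(a,p) are the first generalized Stieltjes constants. -/

import Mathlib

open Finset Filter Topology

/-!
Write `δ a = γ₁(a, q) - γ₁(q - a, q)` for `1 ≤ a < q / 2`. The sine transform of `δ` at `b` is the
conditionally convergent series `∑ sin (2πbn / q) log n / n`, that is, minus the derivative at `1`
of the periodic zeta function. The functional equation relates it to the Hurwitz zeta function at
`0`, which gives Kummer's formula: it equals `π / 2` times `log Γ(b / q) - log Γ(1 - b / q)`, up to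
a rational multiple of the constant `C = π (γ + log 2π)`. Inverting the sine transform, which is
orthogonal up to scaling and has algebraic entries, expresses `δ a` as `π` times the `a`-th member
of a linearly independent family, modulo algebraic multiples of `C`. Whenever `δ a` is algebraic,
that member times `π` lies in the span of `1` and `C` over the real algebraic numbers, so this
happens for at most two `a`; for every other `a`, one of `γ₁(a, q)` and `γ₁(q - a, q)` is
transcendental.
-/

theorem hasSum_and_hasSum_deriv_of_eventually_hasSum {ι : Type*} {g : ι → ℂ → ℂ} {F : ℂ → ℂ}
    {u : ι → ℝ} {U : Set ℂ} {z₀ z : ℂ} (hU : IsOpen U) (hUc : IsPreconnected U) (hu : Summable u)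
    (hg : ∀ n, DifferentiableOn ℂ (g n) U) (hgu : ∀ n, ∀ z ∈ U, ‖g n z‖ ≤ u n)
    (hF : DifferentiableOn ℂ F U) (hz₀ : z₀ ∈ U)
    (h : ∀ᶠ z in 𝓝 z₀, HasSum (fun n => g n z) (F z)) (hz : z ∈ U) :
    HasSum (fun n => g n z) (F z) ∧ HasSum (fun n => deriv (g n) z) (deriv F z) := by
  have hF' : Set.EqOn F (fun z => ∑' n, g n z) U :=
    (hF.analyticOnNhd hU).eqOn_of_preconnected_of_eventuallyEq
      ((Complex.differentiableOn_tsum_of_summable_norm hu hg hU hgu).analyticOnNhd hU) hUc hz₀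
      (h.mono fun _ hz => hz.tsum_eq.symm)
  rw [hF' hz, (hF'.eventuallyEq_of_mem (hU.mem_nhds hz)).deriv_eq]
  exact ⟨(Summable.of_norm_bounded hu fun n => hgu n z hz).hasSum,
    Complex.hasSum_deriv_of_summable_norm hu hg hU hgu hz⟩

theorem isOpen_re_gt_inter_ball (σ R : ℝ) : IsOpen ({s : ℂ | σ < s.re} ∩ Metric.ball 0 R) :=
  (isOpen_lt continuous_const Complex.continuous_re).inter Metric.isOpen_ball

theorem isPreconnected_re_gt_inter_ball (σ R : ℝ) :
    IsPreconnected ({s : ℂ | σ < s.re} ∩ Metric.ball 0 R) :=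
  ((convex_halfSpace_re_gt σ).inter (convex_ball 0 R)).isPreconnected

theorem hasDerivAt_ofReal_cpow_neg (s : ℂ) {t : ℝ} (ht : 0 < t) :
    HasDerivAt (fun y : ℝ => (y : ℂ) ^ (-s)) (-s * (t : ℂ) ^ (-s - 1)) t := by
  have h := (hasDerivAt_id (t : ℂ)).cpow_const (c := -s) (.inl (by simpa using ht))
  simpa using h.comp_ofReal

theorem norm_ofReal_cpow_neg_sub_le (s : ℂ) (hs : -1 ≤ s.re) {u x y : ℝ} (hu : 0 < u)
    (hx : u ≤ x) (hy : u ≤ y) :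
    ‖(x : ℂ) ^ (-s) - (y : ℂ) ^ (-s)‖ ≤ ‖s‖ * u ^ (-s.re - 1) * |x - y| := by
  refine (convex_Ici u).norm_image_sub_le_of_norm_hasDerivWithin_le
    (fun t ht => (hasDerivAt_ofReal_cpow_neg s (hu.trans_le ht)).hasDerivWithinAt)
    (fun t (ht : u ≤ t) => ?_) hy hx
  rw [norm_mul, norm_neg, Complex.norm_cpow_eq_rpow_re_of_pos (hu.trans_le ht)]
  gcongr ?_ * ?_
  exact Real.rpow_le_rpow_of_nonpos hu ht (by simp; linarith)

theorem norm_ofReal_cpow_neg_sub_add_le (s : ℂ) (hs : -2 ≤ s.re) {u v w x y : ℝ} (hu : 0 < u)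
    (hw : w ∈ Set.Icc u v) (hx : x ∈ Set.Icc u v) (hy : y ∈ Set.Icc u v) :
    ‖(x : ℂ) ^ (-s) - (y : ℂ) ^ (-s) + (x - y) * (s * (w : ℂ) ^ (-s - 1))‖ ≤
      ‖s‖ * (‖s + 1‖ * u ^ (-s.re - 2) * (v - u)) * |x - y| := by
  have hderiv (t : ℝ) (ht : t ∈ Set.Icc u v) :
      HasDerivWithinAt (fun y : ℝ => (y : ℂ) ^ (-s) + y * (s * (w : ℂ) ^ (-s - 1)))
        (s * ((w : ℂ) ^ (-(s + 1)) - (t : ℂ) ^ (-(s + 1)))) (Set.Icc u v) t := by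
    refine (((hasDerivAt_ofReal_cpow_neg s (hu.trans_le ht.1)).add
      (Complex.ofRealCLM.hasDerivAt.mul_const _)).congr_deriv ?_).hasDerivWithinAt
    rw [neg_add', Complex.ofRealCLM_apply, Complex.ofReal_one]
    ring
  have hbound (t : ℝ) (ht : t ∈ Set.Icc u v) :
      ‖s * ((w : ℂ) ^ (-(s + 1)) - (t : ℂ) ^ (-(s + 1)))‖ ≤
        ‖s‖ * (‖s + 1‖ * u ^ (-s.re - 2) * (v - u)) := by
    rw [norm_mul]
    gcongr
    refine (norm_ofReal_cpow_neg_sub_le (s + 1) (by simp; linarith) hu hw.1 ht.1).trans ?_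
    rw [show -(s + 1).re - 1 = -s.re - 2 by simp; ring]
    gcongr
    exact abs_sub_le_of_le_of_le hw.1 hw.2 ht.1 ht.2
  convert! (convex_Icc u v).norm_image_sub_le_of_norm_hasDerivWithin_le hderiv hbound hy hx using 2
  ring

theorem hasDerivAt_const_cpow_neg {c : ℂ} (hc : c ≠ 0) (s : ℂ) :
    HasDerivAt (fun s : ℂ => c ^ (-s)) (-(Complex.log c * c ^ (-s))) s := by
  simpa [mul_comm] using (hasDerivAt_neg s).const_cpow (.inl hc)

/-- The `n`-th term of the summation by parts of the Dirichlet series `∑ φ n / n ^ s`. -/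
noncomputable def abelTerm (φ : ℕ → ℂ) (n : ℕ) (s : ℂ) : ℂ :=
  (∑ k ∈ Icc 1 n, φ k) * (((n : ℝ) : ℂ) ^ (-s) - ((n + 1 : ℝ) : ℂ) ^ (-s))

theorem sum_LSeries_term_eq_sum_abelTerm (φ : ℕ → ℂ) (s : ℂ) (N : ℕ) :
    ∑ n ∈ range (N + 1), LSeries.term φ s n =
      ∑ n ∈ range (N + 1), abelTerm φ n s + (∑ k ∈ Icc 1 N, φ k) * ((N + 1 : ℝ) : ℂ) ^ (-s) := by
  induction N with
  | zero => simp [abelTerm]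
  | succ N ih =>
    rw [sum_range_succ, ih, sum_range_succ _ (N + 1), abelTerm, sum_Icc_succ_top (by lia),
      LSeries.term_of_ne_zero N.succ_ne_zero, div_eq_mul_inv, ← Complex.cpow_neg]
    push_cast
    ring

theorem differentiable_abelTerm (φ : ℕ → ℂ) (n : ℕ) : Differentiable ℂ (abelTerm φ n) := by
  rcases n.eq_zero_or_pos with rfl | hn
  · have h : abelTerm φ 0 = fun _ => 0 := by ext; simp [abelTerm]
    exact h ▸ differentiable_const 0
  · intro s
    exact ((hasDerivAt_const_cpow_neg (by exact_mod_cast hn.ne') s).differentiableAt.sub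
      (hasDerivAt_const_cpow_neg (by exact_mod_cast n.succ_ne_zero) s).differentiableAt).const_mul _

theorem norm_abelTerm_le {φ : ℕ → ℂ} {M : ℝ} (hφ : ∀ N, ‖∑ n ∈ Icc 1 N, φ n‖ ≤ M)
    (n : ℕ) {s : ℂ} {σ R : ℝ} (hσ : 0 < σ) (hs : s ∈ {s : ℂ | σ < s.re} ∩ Metric.ball 0 R) :
    ‖abelTerm φ n s‖ ≤ M * R * (n : ℝ) ^ (-(σ + 1)) := by
  obtain ⟨hσs : σ < s.re, hR⟩ := hs
  rw [mem_ball_zero_iff] at hR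
  have hM : 0 ≤ M := (norm_nonneg _).trans (hφ 0)
  have hR₀ : 0 ≤ R := (norm_nonneg _).trans hR.le
  rcases n.eq_zero_or_pos with rfl | hn
  · simp only [abelTerm, Icc_eq_empty_of_lt zero_lt_one, sum_empty, zero_mul, norm_zero]
    positivity
  have hn1 : (1 : ℝ) ≤ n := by exact_mod_cast hn
  rw [abelTerm, norm_mul, mul_assoc]
  gcongr
  · exact hφ n
  calc _ ≤ ‖s‖ * (n : ℝ) ^ (-s.re - 1) * |(n : ℝ) - (n + 1)| :=
        norm_ofReal_cpow_neg_sub_le s (by linarith) (by linarith) le_rfl (by linarith)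
    _ = ‖s‖ * (n : ℝ) ^ (-s.re - 1) := by simp
    _ ≤ R * (n : ℝ) ^ (-(σ + 1)) := by
        gcongr ?_ * _ ^ ?_
        linarith

theorem tendsto_log_mul_cpow_neg {s : ℂ} (hs : 0 < s.re) :
    Tendsto (fun N : ℕ => Complex.log ((N + 1 : ℝ) : ℂ) * ((N + 1 : ℝ) : ℂ) ^ (-s))
      atTop (𝓝 0) := by
  rw [tendsto_zero_iff_norm_tendsto_zero]
  have h := (isLittleO_log_rpow_atTop hs).norm_norm.tendsto_div_nhds_zero.comp
    (tendsto_atTop_add_const_right atTop (1 : ℝ) tendsto_natCast_atTop_atTop)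
  refine h.congr fun N => ?_
  have hN : (0 : ℝ) < N + 1 := by positivity
  rw [norm_mul, ← Complex.ofReal_log hN.le, Complex.norm_real,
    Complex.norm_cpow_eq_rpow_re_of_pos hN, Complex.neg_re, Real.rpow_neg hN.le]
  simp [div_eq_mul_inv, abs_of_pos (Real.rpow_pos_of_pos hN s.re)]

theorem tendsto_cpow_neg {s : ℂ} (hs : 0 < s.re) :
    Tendsto (fun N : ℕ => ((N + 1 : ℝ) : ℂ) ^ (-s)) atTop (𝓝 0) := by
  rw [tendsto_zero_iff_norm_tendsto_zero]
  refine ((tendsto_rpow_neg_atTop hs).comp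
    (tendsto_atTop_add_const_right atTop (1 : ℝ) tendsto_natCast_atTop_atTop)).congr fun N => ?_
  rw [Complex.norm_cpow_eq_rpow_re_of_pos N.cast_add_one_pos, Complex.neg_re, Function.comp_apply]

theorem sum_term_logMul_eq (φ : ℕ → ℂ) (s : ℂ) (N : ℕ) :
    ∑ n ∈ range (N + 1), LSeries.term (LSeries.logMul φ) s n =
      -∑ n ∈ range (N + 1), deriv (abelTerm φ n) s +
        (∑ k ∈ Icc 1 N, φ k) * (Complex.log ((N + 1 : ℝ) : ℂ) * ((N + 1 : ℝ) : ℂ) ^ (-s)) := by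
  have hN : ((N + 1 : ℝ) : ℂ) ≠ 0 := by exact_mod_cast N.succ_ne_zero
  have h := HasDerivAt.fun_sum (u := range (N + 1)) fun n _ => LSeries.hasDerivAt_term φ n s
  simp only [sum_LSeries_term_eq_sum_abelTerm] at h
  have h' := h.unique ((HasDerivAt.fun_sum fun n _ =>
    (differentiable_abelTerm φ n s).hasDerivAt).add
    ((hasDerivAt_const_cpow_neg hN s).const_mul _))
  rw [sum_neg_distrib] at h'
  linear_combination -h'

theorem hasSum_abelTerm {φ : ℕ → ℂ} {M : ℝ} (hφ : ∀ N, ‖∑ n ∈ Icc 1 N, φ n‖ ≤ M) {s L : ℂ}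
    (hs : 0 < s.re) (hL : LSeriesHasSum φ s L) : HasSum (fun n => abelTerm φ n s) L := by
  have hsum : Summable fun n => abelTerm φ n s :=
    .of_norm_bounded ((Real.summable_nat_rpow.2 (by linarith)).mul_left (M * (‖s‖ + 1)))
      fun n => norm_abelTerm_le hφ n (half_pos hs) ⟨half_lt_self hs, by simp⟩
  have hboundary : Tendsto (fun N : ℕ => (∑ k ∈ Icc 1 N, φ k) * ((N + 1 : ℝ) : ℂ) ^ (-s))
      atTop (𝓝 0) :=
    isBoundedUnder_le_mul_tendsto_zero (isBoundedUnder_of ⟨M, hφ⟩) (tendsto_cpow_neg hs)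
  have hlim := ((tendsto_add_atTop_iff_nat 1).2 hL.tendsto_sum_nat).sub hboundary
  simp only [sum_LSeries_term_eq_sum_abelTerm, add_sub_cancel_right, sub_zero] at hlim
  rw [← tendsto_nhds_unique ((tendsto_add_atTop_iff_nat 1).2 hsum.hasSum.tendsto_sum_nat) hlim]
  exact hsum.hasSum

theorem tendsto_sum_logMul_of_bounded_sum {φ : ℕ → ℂ} {F : ℂ → ℂ} {M : ℝ}
    (hφ : ∀ N, ‖∑ n ∈ Icc 1 N, φ n‖ ≤ M) (hF : DifferentiableOn ℂ F {s | 0 < s.re})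
    (hφF : ∀ s : ℂ, 1 < s.re → LSeriesHasSum φ s (F s)) {s : ℂ} (hs : 0 < s.re) :
    Tendsto (fun N : ℕ => ∑ n ∈ range (N + 1), LSeries.term (LSeries.logMul φ) s n) atTop
      (𝓝 (-deriv F s)) := by
  set U := {z : ℂ | s.re / 2 < z.re} ∩ Metric.ball 0 (‖s‖ + 2)
  have hsU : s ∈ U := ⟨half_lt_self hs, by simp⟩
  have hs1U : s + 1 ∈ U := by
    refine ⟨?_, mem_ball_zero_iff.2 ((norm_add_le s 1).trans_lt (by simp))⟩
    simp only [Set.mem_ofPred_eq, Complex.add_re, Complex.one_re]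
    linarith
  have hev : ∀ᶠ z in 𝓝 (s + 1), HasSum (fun n => abelTerm φ n z) (F z) := by
    filter_upwards [(isOpen_lt continuous_const Complex.continuous_re).mem_nhds
      (show (1 : ℝ) < (s + 1).re by simpa using hs)] with z (hz : 1 < z.re)
    exact hasSum_abelTerm hφ (by linarith) (hφF z hz)
  have hder : HasSum (fun n => deriv (abelTerm φ n) s) (deriv F s) :=
    (hasSum_and_hasSum_deriv_of_eventually_hasSum (isOpen_re_gt_inter_ball _ _)
      (isPreconnected_re_gt_inter_ball _ _)
      ((Real.summable_nat_rpow.2 (by linarith)).mul_left _)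
      (fun n => (differentiable_abelTerm φ n).differentiableOn)
      (fun n z hz => norm_abelTerm_le hφ n (half_pos hs) hz)
      (hF.mono fun z hz => (half_pos hs).trans hz.1) hs1U hev hsU).2
  have hboundary : Tendsto (fun N : ℕ => (∑ k ∈ Icc 1 N, φ k) *
      (Complex.log ((N + 1 : ℝ) : ℂ) * ((N + 1 : ℝ) : ℂ) ^ (-s))) atTop (𝓝 0) :=
    isBoundedUnder_le_mul_tendsto_zero (isBoundedUnder_of ⟨M, hφ⟩) (tendsto_log_mul_cpow_neg hs)
  have hlim := (((tendsto_add_atTop_iff_nat 1).2 hder.tendsto_sum_nat).neg.add hboundary)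
  rw [add_zero] at hlim
  exact hlim.congr fun N => (sum_term_logMul_eq φ s N).symm

theorem exists_abs_sum_sin_le (θ : ℝ) :
    ∃ M, ∀ N : ℕ, |∑ n ∈ range N, Real.sin (θ * n)| ≤ M := by
  by_cases hθ : ∃ k : ℤ, θ = k * (2 * Real.pi)
  · obtain ⟨k, rfl⟩ := hθ
    refine ⟨0, fun N => (abs_eq_zero.2 (sum_eq_zero fun n _ => ?_)).le⟩
    rw [← Real.sin_zero, ← Real.sin_add_int_mul_two_pi 0 (k * n)]
    push_cast
    ring_nf
  · push Not at hθ
    refine ⟨1 / |Real.sin (θ / 2)|, fun N => ?_⟩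
    have hsum := Real.sum_sin N hθ 0
    simp only [add_zero] at hsum
    rw [hsum, abs_div, abs_mul]
    gcongr
    exact mul_le_one₀ (Real.abs_sin_le_one _) (abs_nonneg _) (Real.abs_sin_le_one _)

theorem sum_Icc_one_eq_sum_range_succ {M : Type*} [AddCommMonoid M] {f : ℕ → M} (hf : f 0 = 0)
    (N : ℕ) : ∑ n ∈ Icc 1 N, f n = ∑ n ∈ range (N + 1), f n :=
  sum_subset (fun n hn => by simp at hn ⊢; lia) fun n hn hn' => by
    rw [show n = 0 by simp at hn hn'; lia, hf]

theorem tendsto_sum_sin_mul_log_div (x : ℝ) :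
    Tendsto (fun N : ℕ => ∑ n ∈ Icc 1 N, Real.sin (2 * Real.pi * x * n) * (Real.log n / n)) atTop
      (𝓝 (-deriv (HurwitzZeta.sinZeta x) 1).re) := by
  obtain ⟨M, hM⟩ := exists_abs_sum_sin_le (2 * Real.pi * x)
  have hbound (N : ℕ) : ‖∑ n ∈ Icc 1 N, (Real.sin (2 * Real.pi * x * n) : ℂ)‖ ≤ M := by
    rw [← Complex.ofReal_sum, Complex.norm_real, sum_Icc_one_eq_sum_range_succ (by simp)]
    exact hM _
  have hlim := tendsto_sum_logMul_of_bounded_sum hbound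
    (HurwitzZeta.differentiableAt_sinZeta x).differentiableOn
    (fun s hs => HurwitzZeta.LSeriesHasSum_sin x hs) (s := 1) (by simp)
  refine ((Complex.continuous_re.tendsto _).comp hlim).congr fun N => ?_
  rw [Function.comp_apply, sum_Icc_one_eq_sum_range_succ (by simp), Complex.re_sum]
  refine sum_congr rfl fun n _ => ?_
  rcases eq_or_ne n 0 with rfl | hn
  · simp
  · rw [LSeries.term_of_ne_zero hn, LSeries.logMul, ← Complex.natCast_log, Complex.cpow_one,
      ← Complex.ofReal_natCast, ← Complex.ofReal_mul, ← Complex.ofReal_div, Complex.ofReal_re]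
    ring

/-- The `n`-th term of the Hurwitz series for `ζ(s, x) - ζ(s, 1 - x)`, corrected by a multiple of a
telescoping series so that the sum converges absolutely on `-1 < re s`. -/
noncomputable def lerchTerm (x : ℝ) (n : ℕ) (s : ℂ) : ℂ :=
  ((n + x : ℝ) : ℂ) ^ (-s) - ((n + (1 - x) : ℝ) : ℂ) ^ (-s) -
    (1 - 2 * x) * (((n + x : ℝ) : ℂ) ^ (-s) - (((n + 1 : ℕ) + x : ℝ) : ℂ) ^ (-s))

/-- The sum of `lerchTerm x n s` over `n`. -/
noncomputable def lerchSum (x : ℝ) (s : ℂ) : ℂ :=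
  2 * HurwitzZeta.hurwitzZetaOdd x s - (1 - 2 * x) * (x : ℂ) ^ (-s)

theorem hasDerivAt_natCast_add_cpow_neg {x : ℝ} (hx : 0 < x) (n : ℕ) (s : ℂ) :
    HasDerivAt (fun s : ℂ => ((n + x : ℝ) : ℂ) ^ (-s))
      (-(Real.log (n + x) * ((n + x : ℝ) : ℂ) ^ (-s))) s := by
  have h : 0 < n + x := by positivity
  rw [Complex.ofReal_log h.le]
  exact hasDerivAt_const_cpow_neg (by exact_mod_cast h.ne') s

theorem rpow_natCast_add_le {m : ℝ} (hm : 0 < m) (hm₁ : m ≤ 1) {e : ℝ}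
    (he : e ∈ Set.Icc (-5) (-3 / 2)) (n : ℕ) :
    (n + m) ^ e ≤ m ^ (-5 : ℝ) * ((n + 1 : ℕ) : ℝ) ^ (-3 / 2 : ℝ) := by
  have hle : m * ((n + 1 : ℕ) : ℝ) ≤ n + m := by push_cast; nlinarith
  calc (n + m) ^ e ≤ (m * ((n + 1 : ℕ) : ℝ)) ^ e :=
        Real.rpow_le_rpow_of_nonpos (by positivity) hle (by linarith [he.2])
    _ = m ^ e * ((n + 1 : ℕ) : ℝ) ^ e := Real.mul_rpow hm.le (Nat.cast_nonneg _)
    _ ≤ m ^ (-5 : ℝ) * ((n + 1 : ℕ) : ℝ) ^ (-3 / 2 : ℝ) := by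
        gcongr ?_ * ?_
        · exact Real.rpow_le_rpow_of_exponent_ge hm hm₁ he.1
        · exact Real.rpow_le_rpow_of_exponent_le (by simp) he.2

-- The first-order parts of the two differences in `lerchTerm` cancel, leaving second differences.
theorem norm_lerchTerm_le_rpow {x m : ℝ} (hm : 0 < m) (hmx : x ∈ Set.Icc m (1 - m)) (n : ℕ) {s : ℂ}
    (hs : -2 ≤ s.re) : ‖lerchTerm x n s‖ ≤ 4 * ‖s‖ * ‖s + 1‖ * (n + m) ^ (-s.re - 2) := by
  obtain ⟨hmx, hxm⟩ := hmx
  set w := s * ((n + x : ℝ) : ℂ) ^ (-s - 1)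
  set B := ‖s‖ * (‖s + 1‖ * (n + m) ^ (-s.re - 2) * (n + m + 2 - (n + m)))
  have hbound {t : ℝ} (ht : t ∈ Set.Icc m (m + 2)) :
      ‖((n + x : ℝ) : ℂ) ^ (-s) - ((n + t : ℝ) : ℂ) ^ (-s) + (x - t) * w‖ ≤ B * |x - t| := by
    have hmem {t : ℝ} (ht : t ∈ Set.Icc m (m + 2)) : n + t ∈ Set.Icc (n + m) (n + m + 2) :=
      ⟨by linarith [ht.1], by linarith [ht.2]⟩
    have hx : x ∈ Set.Icc m (m + 2) := ⟨hmx, by linarith⟩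
    have h := norm_ofReal_cpow_neg_sub_add_le s hs (by positivity) (hmem hx) (hmem hx) (hmem ht)
    rwa [← Complex.ofReal_sub, add_sub_add_left_eq_sub, Complex.ofReal_sub] at h
  have hrefl := hbound (t := 1 - x) ⟨by linarith, by linarith⟩
  have hshift := hbound (t := 1 + x) ⟨by linarith, by linarith⟩
  have hB : 0 ≤ B := by simp only [B, add_sub_cancel_left]; positivity
  have hx : |1 - 2 * x| ≤ 1 := abs_le.2 ⟨by linarith, by linarith⟩
  calc ‖lerchTerm x n s‖
      = ‖((n + x : ℝ) : ℂ) ^ (-s) - ((n + (1 - x) : ℝ) : ℂ) ^ (-s) + (x - (1 - x : ℝ)) * w -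
          (1 - 2 * x : ℝ) * (((n + x : ℝ) : ℂ) ^ (-s) - ((n + (1 + x) : ℝ) : ℂ) ^ (-s) +
            (x - (1 + x : ℝ)) * w)‖ := by
        rw [lerchTerm, Nat.cast_add_one, add_assoc (n : ℝ)]
        push_cast
        ring_nf
    _ ≤ B * |x - (1 - x)| + |1 - 2 * x| * (B * |x - (1 + x)|) := by
        refine (norm_sub_le _ _).trans (add_le_add hrefl ?_)
        rw [norm_mul, Complex.norm_real, Real.norm_eq_abs]
        gcongr
    _ = B * |1 - 2 * x| * 2 := by
        rw [show x - (1 - x) = -(1 - 2 * x) by ring, show x - (1 + x) = -1 by ring]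
        simp only [abs_neg, abs_one]
        ring
    _ ≤ B * 1 * 2 := by gcongr
    _ = 4 * ‖s‖ * ‖s + 1‖ * (n + m) ^ (-s.re - 2) := by ring

theorem norm_lerchTerm_le {x : ℝ} (hx : x ∈ Set.Ioo 0 1) (n : ℕ) {s : ℂ}
    (hs : s ∈ {s : ℂ | -1 / 2 < s.re} ∩ Metric.ball 0 3) :
    ‖lerchTerm x n s‖ ≤ 48 * min x (1 - x) ^ (-5 : ℝ) * ((n + 1 : ℕ) : ℝ) ^ (-3 / 2 : ℝ) := by
  obtain ⟨hσ : -1 / 2 < s.re, hs₃⟩ := hs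
  rw [mem_ball_zero_iff] at hs₃
  have hσ₃ : s.re < 3 := (Complex.re_le_norm s).trans_lt hs₃
  have hs₄ : ‖s + 1‖ ≤ 4 := (norm_add_le s 1).trans (by rw [norm_one]; linarith)
  set m := min x (1 - x)
  have hm : 0 < m := lt_min hx.1 (sub_pos.2 hx.2)
  have hmx : m ≤ x := min_le_left ..
  have hmx' : m ≤ 1 - x := min_le_right ..
  calc ‖lerchTerm x n s‖ ≤ 4 * ‖s‖ * ‖s + 1‖ * (n + m) ^ (-s.re - 2) :=
        norm_lerchTerm_le_rpow hm ⟨hmx, by linarith⟩ n (by linarith)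
    _ ≤ 4 * 3 * 4 * (m ^ (-5 : ℝ) * ((n + 1 : ℕ) : ℝ) ^ (-3 / 2 : ℝ)) := by
        gcongr
        exact rpow_natCast_add_le hm (hmx.trans hx.2.le) ⟨by linarith, by linarith⟩ n
    _ = _ := by ring

theorem hasSum_lerchTerm {x : ℝ} (hx : x ∈ Set.Icc 0 1) {s : ℂ} (hs : 1 < s.re) :
    HasSum (fun n => lerchTerm x n s) (lerchSum x s) := by
  have hodd := (HurwitzZeta.hasSum_nat_hurwitzZetaOdd_of_mem_Icc hx hs).mul_left 2
  have hζ := HurwitzZeta.hasSum_hurwitzZeta_of_one_lt_re hx hs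
  have htel := hζ.sub ((hasSum_nat_add_iff' 1).2 hζ)
  convert! hodd.sub (htel.mul_left (1 - 2 * (x : ℂ))) using 1
  · ext n
    simp only [lerchTerm, Complex.cpow_neg]
    push_cast
    ring_nf
  · simp [lerchSum, Complex.cpow_neg]

theorem hasDerivAt_lerchTerm {x : ℝ} (hx : x ∈ Set.Ioo 0 1) (n : ℕ) (s : ℂ) :
    HasDerivAt (lerchTerm x n)
      (-(Real.log (n + x) * ((n + x : ℝ) : ℂ) ^ (-s)) -
          -(Real.log (n + (1 - x)) * ((n + (1 - x) : ℝ) : ℂ) ^ (-s)) -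
        (1 - 2 * x) * (-(Real.log (n + x) * ((n + x : ℝ) : ℂ) ^ (-s)) -
          -(Real.log ((n + 1 : ℕ) + x) * (((n + 1 : ℕ) + x : ℝ) : ℂ) ^ (-s)))) s :=
  have h := hasDerivAt_natCast_add_cpow_neg hx.1
  ((h n s).sub (hasDerivAt_natCast_add_cpow_neg (sub_pos.2 hx.2) n s)).sub
    (((h n s).sub (h (n + 1) s)).const_mul _)

theorem sum_deriv_lerchTerm_zero {x : ℝ} (hx : x ∈ Set.Ioo 0 1) (N : ℕ) :
    ∑ n ∈ range (N + 1), deriv (lerchTerm x n) 0 =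
      ((Real.BohrMollerup.logGammaSeq x N - Real.BohrMollerup.logGammaSeq (1 - x) N +
        (1 - 2 * x) * (Real.log x - (Real.log (N + (1 + x)) - Real.log N)) : ℝ) : ℂ) := by
  have hderiv (n : ℕ) : deriv (lerchTerm x n) 0 = ((Real.log (n + (1 - x)) - Real.log (n + x) -
      (1 - 2 * x) * (Real.log ((n + 1 : ℕ) + x) - Real.log (n + x)) : ℝ) : ℂ) := by
    rw [(hasDerivAt_lerchTerm hx n 0).deriv]
    simp only [neg_zero, Complex.cpow_zero]
    push_cast
    ring
  simp only [hderiv, ← Complex.ofReal_sum]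
  rw [sum_sub_distrib, sum_sub_distrib, ← mul_sum, sum_range_sub fun n : ℕ => Real.log (n + x)]
  simp only [Real.BohrMollerup.logGammaSeq, add_comm x, add_comm (1 - x)]
  push_cast
  rw [zero_add, add_assoc (N : ℝ)]
  ring

/-- Twice the odd part of `log Γ` with respect to the reflection `x ↦ 1 - x`. -/
noncomputable def logGammaOdd (x : ℝ) : ℝ :=
  Real.log (Real.Gamma x) - Real.log (Real.Gamma (1 - x))

theorem tendsto_sum_deriv_lerchTerm_zero {x : ℝ} (hx : x ∈ Set.Ioo 0 1) :
    Tendsto (fun N : ℕ => ∑ n ∈ range (N + 1), deriv (lerchTerm x n) 0) atTop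
      (𝓝 (logGammaOdd x + (1 - 2 * x) * Real.log x : ℝ)) := by
  simp only [sum_deriv_lerchTerm_zero hx]
  refine (Complex.continuous_ofReal.tendsto _).comp
    (((Real.BohrMollerup.tendsto_log_gamma hx.1).sub
      (Real.BohrMollerup.tendsto_log_gamma (sub_pos.2 hx.2))).add (.const_mul _ ?_))
  simpa using ((Real.tendsto_log_comp_add_sub_log (1 + x)).comp
    tendsto_natCast_atTop_atTop).const_sub (Real.log x)

theorem differentiable_lerchSum {x : ℝ} (hx : x ≠ 0) : Differentiable ℂ (lerchSum x) := fun s =>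
  ((HurwitzZeta.differentiable_hurwitzZetaOdd x s).const_mul 2).sub
    ((hasDerivAt_const_cpow_neg (Complex.ofReal_ne_zero.2 hx) s).differentiableAt.const_mul _)

theorem hasSum_lerchTerm_and_hasSum_deriv {x : ℝ} (hx : x ∈ Set.Ioo 0 1) {s : ℂ}
    (hs : s ∈ {s : ℂ | -1 / 2 < s.re} ∩ Metric.ball 0 3) :
    HasSum (fun n => lerchTerm x n s) (lerchSum x s) ∧
      HasSum (fun n => deriv (lerchTerm x n) s) (deriv (lerchSum x) s) := by
  have h2 : ∀ᶠ z in 𝓝 (2 : ℂ), HasSum (fun n => lerchTerm x n z) (lerchSum x z) := by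
    filter_upwards [(isOpen_lt continuous_const Complex.continuous_re).mem_nhds
      (show (1 : ℝ) < (2 : ℂ).re by simp)] with z hz
    exact hasSum_lerchTerm (Set.Ioo_subset_Icc_self hx) hz
  refine hasSum_and_hasSum_deriv_of_eventually_hasSum (isOpen_re_gt_inter_ball _ _)
    (isPreconnected_re_gt_inter_ball _ _) ?_
    (fun n z _ => (hasDerivAt_lerchTerm hx n z).differentiableAt.differentiableWithinAt)
    (fun n z hz => norm_lerchTerm_le hx n hz)
    (differentiable_lerchSum hx.1.ne').differentiableOn
    ⟨by norm_num [Set.mem_ofPred_eq], by norm_num⟩ h2 hs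
  exact ((summable_nat_add_iff 1).2 (Real.summable_nat_rpow.2 (by norm_num))).mul_left _

theorem lerchSum_zero {x : ℝ} (hx : x ∈ Set.Ioo 0 1) : lerchSum x 0 = 0 := by
  refine (hasSum_lerchTerm_and_hasSum_deriv hx (by norm_num)).1.unique ?_
  simp [lerchTerm]

theorem deriv_lerchSum_zero {x : ℝ} (hx : x ∈ Set.Ioo 0 1) :
    deriv (lerchSum x) 0 = (logGammaOdd x + (1 - 2 * x) * Real.log x : ℝ) :=
  tendsto_nhds_unique ((tendsto_add_atTop_iff_nat 1).2
    (hasSum_lerchTerm_and_hasSum_deriv hx (by norm_num)).2.tendsto_sum_nat)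
    (tendsto_sum_deriv_lerchTerm_zero hx)

theorem hurwitzZetaOdd_zero {x : ℝ} (hx : x ∈ Set.Ioo 0 1) :
    HurwitzZeta.hurwitzZetaOdd x 0 = 1 / 2 - x := by
  have h := lerchSum_zero hx
  simp only [lerchSum, neg_zero, Complex.cpow_zero] at h
  linear_combination h / 2

theorem deriv_hurwitzZetaOdd_zero {x : ℝ} (hx : x ∈ Set.Ioo 0 1) :
    deriv (HurwitzZeta.hurwitzZetaOdd x) 0 = logGammaOdd x / 2 := by
  have h := ((HurwitzZeta.differentiable_hurwitzZetaOdd x 0).hasDerivAt.const_mul 2).sub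
    ((hasDerivAt_const_cpow_neg (Complex.ofReal_ne_zero.2 hx.1.ne') 0).const_mul (1 - 2 * (x : ℂ)))
  have h' := h.deriv.symm.trans (deriv_lerchSum_zero hx)
  rw [neg_zero, Complex.cpow_zero, ← Complex.ofReal_log hx.1.le] at h'
  push_cast at h' ⊢
  linear_combination h' / 2

/-- The factor relating the sine zeta function at `s` to the odd Hurwitz zeta function at `1 - s` in
the functional equation. -/
noncomputable def oddGammaFactor (s : ℂ) : ℂ :=
  2 * (2 * Real.pi) ^ (-s) * Complex.Gamma s * Complex.sin (Real.pi * s / 2)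

theorem oddGammaFactor_one : oddGammaFactor 1 = 1 / Real.pi := by
  simp only [oddGammaFactor, Complex.cpow_neg_one, Complex.Gamma_one, mul_one,
    Complex.sin_pi_div_two]
  field_simp

theorem hasDerivAt_oddGammaFactor_one :
    HasDerivAt oddGammaFactor
      (-((Real.eulerMascheroniConstant + Real.log (2 * Real.pi) : ℝ) : ℂ) / Real.pi) 1 := by
  have hsin : HasDerivAt (fun s : ℂ => Complex.sin (Real.pi * s / 2)) 0 1 := by
    convert! (((hasDerivAt_id (1 : ℂ)).const_mul (Real.pi : ℂ)).div_const 2).csin using 1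
    simp
  refine ((((hasDerivAt_const_cpow_neg (by simp) 1).const_mul 2).mul
    Complex.hasDerivAt_Gamma_one).mul hsin).congr_deriv ?_
  have hlog : Complex.log (2 * Real.pi) = (Real.log (2 * Real.pi) : ℝ) := by
    rw [Complex.ofReal_log (by positivity)]
    push_cast
    rfl
  simp only [hlog, Complex.cpow_neg_one, Complex.Gamma_one, mul_one, Complex.sin_pi_div_two,
    Pi.mul_apply, mul_zero, add_zero]
  push_cast
  field_simp
  ring

theorem hurwitzZetaOdd_one_sub_eq (x : UnitAddCircle) {s : ℂ} (hs : 0 < s.re) :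
    HurwitzZeta.hurwitzZetaOdd x (1 - s) = oddGammaFactor s * HurwitzZeta.sinZeta x s := by
  refine HurwitzZeta.hurwitzZetaOdd_one_sub x fun n h => hs.not_ge ?_
  simp [h]

theorem sinZeta_one {x : ℝ} (hx : x ∈ Set.Ioo 0 1) :
    HurwitzZeta.sinZeta x 1 = Real.pi * (1 / 2 - x) := by
  have hπ : (Real.pi : ℂ) ≠ 0 := Complex.ofReal_ne_zero.2 Real.pi_ne_zero
  have h := hurwitzZetaOdd_one_sub_eq x (s := 1) (by simp)
  rw [sub_self, hurwitzZetaOdd_zero hx, oddGammaFactor_one] at h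
  field_simp at h
  linear_combination -h / 2

theorem deriv_sinZeta_one {x : ℝ} (hx : x ∈ Set.Ioo 0 1) :
    -deriv (HurwitzZeta.sinZeta x) 1 =
      ((Real.pi / 2 * logGammaOdd x -
        Real.pi * (Real.eulerMascheroniConstant + Real.log (2 * Real.pi)) * (1 / 2 - x) : ℝ) :
        ℂ) := by
  have hπ : (Real.pi : ℂ) ≠ 0 := Complex.ofReal_ne_zero.2 Real.pi_ne_zero
  have hfe : (fun s => HurwitzZeta.hurwitzZetaOdd x (1 - s)) =ᶠ[𝓝 1]
      fun s => oddGammaFactor s * HurwitzZeta.sinZeta x s := by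
    filter_upwards [(isOpen_lt continuous_const Complex.continuous_re).mem_nhds
      (show (0 : ℝ) < (1 : ℂ).re by simp)] with s hs using hurwitzZetaOdd_one_sub_eq x hs
  have hderiv := hfe.deriv_eq
  rw [deriv_comp_const_sub, sub_self, deriv_hurwitzZetaOdd_zero hx,
    (hasDerivAt_oddGammaFactor_one.fun_mul
      (HurwitzZeta.differentiableAt_sinZeta x 1).hasDerivAt).deriv,
    oddGammaFactor_one, sinZeta_one hx] at hderiv
  field_simp at hderiv
  push_cast at hderiv ⊢
  linear_combination hderiv / 2

theorem tendsto_sum_sin_mul_log_div_logGamma {x : ℝ} (hx : x ∈ Set.Ioo 0 1) :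
    Tendsto (fun N : ℕ => ∑ n ∈ Icc 1 N, Real.sin (2 * Real.pi * x * n) * (Real.log n / n)) atTop
      (𝓝 (Real.pi / 2 * logGammaOdd x -
        Real.pi * (Real.eulerMascheroniConstant + Real.log (2 * Real.pi)) * (1 / 2 - x))) := by
  have h := tendsto_sum_sin_mul_log_div x
  rwa [deriv_sinZeta_one hx, Complex.ofReal_re] at h

theorem sum_Icc_eq_sum_Icc_half_add {M : Type*} [AddCommMonoid M] {f : ℕ → M} {q : ℕ}
    (hf : ∀ a, 2 * a = q → f a = 0) :
    ∑ a ∈ Icc 1 (q - 1), f a = ∑ a ∈ Icc 1 ((q - 1) / 2), (f a + f (q - a)) := by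
  have hlow : (Icc 1 (q - 1)).filter (fun a => 2 * a < q) = Icc 1 ((q - 1) / 2) := by
    ext a
    simp only [mem_filter, mem_Icc]
    lia
  rw [← sum_filter_add_sum_filter_not _ (fun a => 2 * a < q), hlow, sum_add_distrib]
  congr 1
  refine (sum_of_injOn (q - ·) (fun a ha b hb hab => ?_) (fun a ha => ?_) (fun a ha ha' => hf a ?_)
    fun _ _ => rfl).symm
  · simp only [coe_Icc, Set.mem_Icc] at ha hb hab
    lia
  · simp only [coe_filter, coe_Icc, Set.mem_Icc, Set.mem_ofPred_eq, mem_Icc] at ha ⊢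
    lia
  · by_contra hne
    simp only [mem_filter, mem_Icc] at ha
    refine ha' ⟨q - a, ?_, ?_⟩
    · simp only [coe_Icc, Set.mem_Icc]
      lia
    · change q - (q - a) = a
      lia

theorem sum_mul_sum_filter_mod_eq {R : Type*} [Semiring R] {q : ℕ} (hq : 0 < q) {f : ℕ → R}
    (hf : f 0 = 0) (s : Finset ℕ) (v : ℕ → R) :
    ∑ a ∈ Icc 1 (q - 1), f a * ∑ n ∈ s.filter (fun n => n % q = a % q), v n =
      ∑ n ∈ s, f (n % q) * v n := by
  rw [sum_Icc_one_eq_sum_range_succ (by rw [hf, zero_mul]), Nat.sub_add_cancel hq,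
    ← sum_fiberwise_of_maps_to (s := s) (t := range q) (g := (· % q))
      fun n _ => mem_range.2 (Nat.mod_lt n hq)]
  refine sum_congr rfl fun a ha => ?_
  rw [mul_sum, Nat.mod_eq_of_lt (mem_range.1 ha)]
  exact sum_congr rfl fun n hn => by rw [(mem_filter.1 hn).2]

/-- The kernel `sin (2πab/q)` of the discrete sine transform on `ℤ/qℤ`, with residues represented
by natural numbers. -/
noncomputable def sineKernel (q a b : ℕ) : ℝ :=
  Real.sin (2 * Real.pi * (a * b / q))

theorem sineKernel_zero_left (q b : ℕ) : sineKernel q 0 b = 0 := by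
  simp [sineKernel]

theorem sineKernel_comm (q a b : ℕ) : sineKernel q a b = sineKernel q b a := by
  rw [sineKernel, sineKernel, mul_comm (a : ℝ)]

theorem sineKernel_mod_left (q a b : ℕ) : sineKernel q (a % q) b = sineKernel q a b := by
  rcases q.eq_zero_or_pos with rfl | hq
  · rw [Nat.mod_zero]
  · rw [sineKernel, sineKernel, ← Real.sin_add_nat_mul_two_pi _ (a / q * b)]
    congr 1
    conv_rhs => rw [← Nat.mod_add_div a q]
    push_cast
    field_simp

theorem sineKernel_sub_left {q a : ℕ} (ha : a ≤ q) (b : ℕ) :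
    sineKernel q (q - a) b = -sineKernel q a b := by
  rcases q.eq_zero_or_pos with rfl | hq
  · simp [sineKernel]
  · rw [sineKernel, sineKernel, ← Real.sin_nat_mul_two_pi_sub _ b, Nat.cast_sub ha]
    congr 1
    field_simp

theorem sineKernel_eq_zero_of_two_mul_eq {q a : ℕ} (ha : 2 * a = q) (b : ℕ) :
    sineKernel q a b = 0 := by
  have h := sineKernel_sub_left (show a ≤ q by lia) b
  rw [show q - a = a by lia] at h
  linarith

theorem sum_sineKernel (q b : ℕ) : ∑ a ∈ Icc 1 (q - 1), sineKernel q a b = 0 := by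
  rw [sum_Icc_eq_sum_Icc_half_add fun a ha => sineKernel_eq_zero_of_two_mul_eq ha b]
  refine sum_eq_zero fun a ha => ?_
  rw [mem_Icc] at ha
  rw [sineKernel_sub_left (by lia), add_neg_cancel]

theorem isAlgebraic_sineKernel (q a b : ℕ) : IsAlgebraic ℚ (sineKernel q a b) := by
  have h := (Real.isAlgebraic_sin_rat_mul_pi (2 * (a * b / q))).extendScalars
    (algebraMap ℤ ℚ).injective_int
  push_cast at h
  rwa [mul_right_comm] at h

theorem sum_cos_two_pi_mul_div {q : ℕ} (hq : 0 < q) (m : ℤ) :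
    ∑ b ∈ range q, Real.cos (2 * Real.pi * m / q * b) = if (q : ℤ) ∣ m then (q : ℝ) else 0 := by
  have hq' : (q : ℝ) ≠ 0 := Nat.cast_ne_zero.2 hq.ne'
  split_ifs with h
  · obtain ⟨k, rfl⟩ := h
    refine (sum_eq_card_nsmul fun b _ => ?_).trans (by rw [card_range, nsmul_one])
    rw [← Real.cos_int_mul_two_pi (k * b)]
    push_cast
    field_simp
  · have hm : ∀ k : ℤ, 2 * Real.pi * m / q ≠ k * (2 * Real.pi) := fun k hk => h ⟨k, by
      field_simp at hk
      exact_mod_cast hk⟩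
    have hsum := Real.sum_cos q hm 0
    have harg : q * (2 * Real.pi * m / q) / 2 = m * Real.pi := by field_simp
    simpa only [add_zero, harg, Real.sin_int_mul_pi, zero_mul, zero_div] using hsum

theorem sineKernel_mul_sineKernel (q b a a' : ℕ) :
    sineKernel q b a * sineKernel q b a' =
      (Real.cos (2 * Real.pi * (a - a' : ℤ) / q * b) -
        Real.cos (2 * Real.pi * (a + a' : ℤ) / q * b)) / 2 := by
  rw [eq_div_iff two_ne_zero, mul_comm, ← mul_assoc, sineKernel, sineKernel,
    Real.two_mul_sin_mul_sin]
  push_cast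
  ring_nf

theorem sum_sineKernel_mul_sineKernel {q a a' : ℕ} (ha : a ∈ Icc 1 ((q - 1) / 2))
    (ha' : a' ∈ Icc 1 ((q - 1) / 2)) :
    ∑ b ∈ Icc 1 ((q - 1) / 2), sineKernel q a b * sineKernel q a' b =
      if a = a' then (q : ℝ) / 4 else 0 := by
  rw [mem_Icc] at ha ha'
  have hq : 0 < q := by lia
  have hsub : (q : ℤ) ∣ a - a' ↔ a = a' := by
    refine ⟨fun h => ?_, fun h => by simp [h]⟩
    have := Int.eq_zero_of_abs_lt_dvd h (by rw [abs_lt]; lia)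
    lia
  have hadd : ¬ (q : ℤ) ∣ a + a' := fun h => by
    have := Int.le_of_dvd (by lia) h
    lia
  have hfull : ∑ b ∈ Icc 1 (q - 1), sineKernel q b a * sineKernel q b a' =
      if a = a' then (q : ℝ) / 2 else 0 := by
    rw [sum_Icc_one_eq_sum_range_succ (by simp [sineKernel_zero_left]), Nat.sub_add_cancel hq]
    simp only [sineKernel_mul_sineKernel, ← sum_div, sum_sub_distrib, sum_cos_two_pi_mul_div hq,
      hsub, hadd, if_false]
    split_ifs <;> simp
  rw [sum_Icc_eq_sum_Icc_half_add fun b hb => by simp [sineKernel_eq_zero_of_two_mul_eq hb]]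
    at hfull
  have hfold : ∑ b ∈ Icc 1 ((q - 1) / 2), (sineKernel q b a * sineKernel q b a' +
      sineKernel q (q - b) a * sineKernel q (q - b) a') =
      2 * ∑ b ∈ Icc 1 ((q - 1) / 2), sineKernel q a b * sineKernel q a' b := by
    rw [mul_sum]
    refine sum_congr rfl fun b hb => ?_
    rw [mem_Icc] at hb
    rw [sineKernel_sub_left (by lia), sineKernel_sub_left (by lia), sineKernel_comm q b,
      sineKernel_comm q b]
    ring
  rw [hfold] at hfull
  split_ifs at hfull ⊢ <;> linarith

/-- `c` is the generalized Stieltjes constant `γ₁(a, q)`, the constant term in the expansion of the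
partial sums of `log n / n` over `n ≡ a mod q`. -/
def IsFirstStieltjesConstant (q a : ℕ) (c : ℝ) : Prop :=
  Tendsto (fun x : ℝ => (∑ n ∈ (Icc 1 ⌊x⌋₊).filter (fun n => n % q = a % q), Real.log n / n) -
    Real.log x ^ 2 / (2 * q)) atTop (𝓝 c)

section FirstStieltjesConstant

variable {q : ℕ} {γ : ℕ → ℝ}

theorem sum_sineKernel_mul_firstStieltjesConstant
    (hγ : ∀ a ∈ Icc 1 (q - 1), IsFirstStieltjesConstant q a (γ a)) {b : ℕ}
    (hb : b ∈ Icc 1 (q - 1)) :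
    ∑ a ∈ Icc 1 (q - 1), sineKernel q a b * γ a =
      Real.pi / 2 * logGammaOdd (b / q) -
        Real.pi * (Real.eulerMascheroniConstant + Real.log (2 * Real.pi)) * (1 / 2 - b / q) := by
  rw [mem_Icc] at hb
  have hq : 0 < q := by lia
  have hx : (b / q : ℝ) ∈ Set.Ioo 0 1 := by
    have hb0 : (0 : ℝ) < b := Nat.cast_pos.2 hb.1
    have hbq : (b : ℝ) < q := Nat.cast_lt.2 (by lia)
    exact ⟨by positivity, (div_lt_one (hb0.trans hbq)).2 hbq⟩
  refine tendsto_nhds_unique (tendsto_finsetSum _ fun a ha =>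
    ((hγ a ha).comp tendsto_natCast_atTop_atTop).const_mul (sineKernel q a b))
    ((tendsto_sum_sin_mul_log_div_logGamma hx).congr fun N => ?_)
  simp only [Function.comp_apply, mul_sub, sum_sub_distrib, Nat.floor_natCast]
  rw [← sum_mul, sum_sineKernel, zero_mul, sub_zero,
    sum_mul_sum_filter_mod_eq hq (sineKernel_zero_left q b)]
  refine sum_congr rfl fun n _ => ?_
  rw [sineKernel_mod_left, sineKernel]
  ring_nf

theorem sum_sineKernel_mul_firstStieltjesConstant_sub
    (hγ : ∀ a ∈ Icc 1 (q - 1), IsFirstStieltjesConstant q a (γ a)) {b : ℕ}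
    (hb : b ∈ Icc 1 (q - 1)) :
    ∑ a ∈ Icc 1 ((q - 1) / 2), sineKernel q a b * (γ a - γ (q - a)) =
      Real.pi / 2 * logGammaOdd (b / q) -
        Real.pi * (Real.eulerMascheroniConstant + Real.log (2 * Real.pi)) * (1 / 2 - b / q) := by
  rw [← sum_sineKernel_mul_firstStieltjesConstant hγ hb, sum_Icc_eq_sum_Icc_half_add fun a ha => by
    rw [sineKernel_eq_zero_of_two_mul_eq ha, zero_mul]]
  refine sum_congr rfl fun a ha => ?_
  rw [mem_Icc] at ha
  rw [sineKernel_sub_left (by lia)]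
  ring

theorem firstStieltjesConstant_sub_eq
    (hγ : ∀ a ∈ Icc 1 (q - 1), IsFirstStieltjesConstant q a (γ a)) {a : ℕ}
    (ha : a ∈ Icc 1 ((q - 1) / 2)) :
    q / 4 * (γ a - γ (q - a)) =
      Real.pi / 2 * ∑ b ∈ Icc 1 ((q - 1) / 2), sineKernel q a b * logGammaOdd (b / q) -
        Real.pi * (Real.eulerMascheroniConstant + Real.log (2 * Real.pi)) *
          ∑ b ∈ Icc 1 ((q - 1) / 2), sineKernel q a b * (1 / 2 - b / q) := by
  calc (q / 4 * (γ a - γ (q - a)) : ℝ)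
      = ∑ a' ∈ Icc 1 ((q - 1) / 2), (∑ b ∈ Icc 1 ((q - 1) / 2),
          sineKernel q a b * sineKernel q a' b) * (γ a' - γ (q - a')) := by
        rw [sum_congr rfl fun a' ha' => by rw [sum_sineKernel_mul_sineKernel ha ha']]
        simp only [ite_mul, zero_mul, sum_ite_eq, if_pos ha]
    _ = ∑ b ∈ Icc 1 ((q - 1) / 2), sineKernel q a b *
          ∑ a' ∈ Icc 1 ((q - 1) / 2), sineKernel q a' b * (γ a' - γ (q - a')) := by
        simp only [sum_mul, mul_sum, mul_assoc]
        exact sum_comm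
    _ = _ := by
        rw [mul_sum, mul_sum, ← sum_sub_distrib]
        refine sum_congr rfl fun b hb => ?_
        rw [sum_sineKernel_mul_firstStieltjesConstant_sub hγ
          (Icc_subset_Icc_right (Nat.div_le_self _ _) hb)]
        ring

end FirstStieltjesConstant

/-- The sine kernel on the nonzero residues modulo sign, as a matrix over the field of real
algebraic numbers. -/
noncomputable def sineMatrix (q : ℕ) :
    Matrix (Icc 1 ((q - 1) / 2)) (Icc 1 ((q - 1) / 2)) (algebraicClosure ℚ ℝ) :=
  Matrix.of fun a b =>
    ⟨sineKernel q a b, mem_algebraicClosure_iff.2 (isAlgebraic_sineKernel q a b)⟩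

theorem sineMatrix_mul_transpose (q : ℕ) :
    sineMatrix q * (sineMatrix q).transpose = (q / 4 : algebraicClosure ℚ ℝ) • 1 := by
  ext a a'
  rw [Matrix.mul_apply, Matrix.smul_apply, Matrix.one_apply]
  simp only [sineMatrix, Matrix.of_apply, Matrix.transpose_apply]
  push_cast
  rw [sum_coe_sort _ fun b => sineKernel q a b * sineKernel q a' b,
    sum_sineKernel_mul_sineKernel a.2 a'.2]
  simp only [Subtype.ext_iff]
  split_ifs
  · simp only [smul_eq_mul, mul_one]
    rfl
  · simp

theorem nondegenerate_sineMatrix {q : ℕ} (hq : 0 < q) : (sineMatrix q).Nondegenerate := by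
  refine Matrix.nondegenerate_of_det_ne_zero (Matrix.det_ne_zero_of_right_inverse
    (B := (4 / q : algebraicClosure ℚ ℝ) • (sineMatrix q).transpose) ?_)
  have hq' : (q : algebraicClosure ℚ ℝ) ≠ 0 := Nat.cast_ne_zero.2 hq.ne'
  rw [Matrix.mul_smul, sineMatrix_mul_transpose, smul_smul,
    div_mul_div_cancel₀' four_ne_zero, div_self hq', one_smul]

theorem linearIndepOn_sum_sineKernel_mul {q : ℕ} (hq : 0 < q) {g : ℕ → ℝ}
    (hg : LinearIndepOn (algebraicClosure ℚ ℝ) g (Icc 1 ((q - 1) / 2))) :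
    LinearIndepOn (algebraicClosure ℚ ℝ)
      (fun a => ∑ b ∈ Icc 1 ((q - 1) / 2), sineKernel q a b * g b) (Icc 1 ((q - 1) / 2)) := by
  have h := LinearIndependent.sum_smul_of_nondegenerate hg (nondegenerate_sineMatrix hq)
  exact (funext fun a => sum_coe_sort _ fun b => sineKernel q a b * g b) ▸ h

theorem card_le_card_of_mul_mem_span {ι K L : Type*} [Field K] [Field L] [Algebra K L]
    {v : ι → L} {s : Finset ι} (hv : LinearIndepOn K v s) {c : L} (hc : c ≠ 0) {w : Finset L}
    (h : ∀ i ∈ s, c * v i ∈ Submodule.span K (w : Set L)) : s.card ≤ w.card := by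
  have hcv : LinearIndependent K fun i : s => c * v i :=
    hv.map' (LinearMap.mulLeft K c) (LinearMap.ker_eq_bot.2 (mul_right_injective₀ hc))
  simpa using linearIndependent_le_span' _ hcv (w : Set L) (Set.range_subset_iff.2 fun i => h i i.2)

open scoped Classical in
theorem card_filter_isAlgebraic_firstStieltjesConstant_sub_le {q : ℕ}
    (hg : LinearIndepOn (algebraicClosure ℚ ℝ) (fun a : ℕ => logGammaOdd (a / q))
      (Icc 1 ((q - 1) / 2)))
    {γ : ℕ → ℝ} (hγ : ∀ a ∈ Icc 1 (q - 1), IsFirstStieltjesConstant q a (γ a)) :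
    ((Icc 1 ((q - 1) / 2)).filter fun a => IsAlgebraic ℚ (γ a - γ (q - a))).card ≤ 2 := by
  rcases q.eq_zero_or_pos with rfl | hq
  · simp
  let C := Real.pi * (Real.eulerMascheroniConstant + Real.log (2 * Real.pi))
  refine (card_le_card_of_mul_mem_span
    ((linearIndepOn_sum_sineKernel_mul hq hg).mono (filter_subset _ _))
    (div_ne_zero Real.pi_ne_zero two_ne_zero) (w := {1, C}) fun a ha => ?_).trans card_le_two
  obtain ⟨ha, hδ⟩ := mem_filter.1 ha
  have ht : ∑ b ∈ Icc 1 ((q - 1) / 2), sineKernel q a b * (1 / 2 - b / q) ∈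
      algebraicClosure ℚ ℝ :=
    sum_mem fun b _ => mul_mem (mem_algebraicClosure_iff.2 (isAlgebraic_sineKernel q a b))
      (sub_mem (div_mem (one_mem _) (ofNat_mem _ 2)) (div_mem (natCast_mem _ _) (natCast_mem _ _)))
  have hδ' : q / 4 * (γ a - γ (q - a)) ∈ algebraicClosure ℚ ℝ :=
    mul_mem (div_mem (natCast_mem _ q) (ofNat_mem _ 4)) (mem_algebraicClosure_iff.2 hδ)
  rw [coe_insert, coe_singleton, Submodule.mem_span_pair]
  refine ⟨⟨_, hδ'⟩, ⟨_, ht⟩, ?_⟩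
  simp only [IntermediateField.smul_def, smul_eq_mul]
  linear_combination firstStieltjesConstant_sub_eq hγ ha

open scoped Classical in
theorem card_filter_not_isAlgebraic_sub_le_ncard (q : ℕ) (γ : ℕ → ℝ) :
    ((Icc 1 ((q - 1) / 2)).filter fun a => ¬ IsAlgebraic ℚ (γ a - γ (q - a))).card ≤
      {a | a ∈ Icc 1 (q - 1) ∧ Transcendental ℚ (γ a)}.ncard := by
  rw [← Set.ncard_coe_finset]
  refine Set.ncard_le_ncard_of_injOn (fun a => if IsAlgebraic ℚ (γ a) then q - a else a)
    (fun a ha => ?_) (fun a ha b hb hab => ?_)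
    ((Icc 1 (q - 1)).finite_toSet.subset fun a ha => ha.1)
  · obtain ⟨ha, hδ⟩ := mem_filter.1 ha
    simp only [mem_Icc] at ha
    simp only [Set.mem_ofPred_eq, mem_Icc]
    split_ifs with h
    · exact ⟨by lia, fun h' => hδ (h.sub h')⟩
    · exact ⟨by lia, h⟩
  · simp only [coe_filter, mem_Icc, Set.mem_ofPred_eq] at ha hb
    simp only at hab
    split_ifs at hab <;> lia

theorem linearIndepOn_logGammaOdd {q : ℕ}
    (h : ∀ c : ℕ → ℂ, (∀ a, IsAlgebraic ℚ (c a)) →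
      ∑ a ∈ Icc 1 (q - 1), c a * (Real.log (Real.Gamma (a / q)) : ℂ) = 0 →
      ∀ a ∈ Icc 1 (q - 1), c a = 0) :
    LinearIndepOn (algebraicClosure ℚ ℝ) (fun a : ℕ => logGammaOdd (a / q))
      (Icc 1 ((q - 1) / 2)) := by
  refine linearIndepOn_finset_iff.2 fun f hf a ha => ?_
  let c (a : ℕ) : algebraicClosure ℚ ℝ :=
    (if 2 * a < q then f a else 0) - if q < 2 * a then f (q - a) else 0
  have hlow {a : ℕ} (ha : a ∈ Icc 1 ((q - 1) / 2)) : c a = f a := by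
    rw [mem_Icc] at ha
    simp only [c]
    rw [if_pos (by lia), if_neg (by lia), sub_zero]
  have hhigh {a : ℕ} (ha : a ∈ Icc 1 ((q - 1) / 2)) : c (q - a) = -f a := by
    rw [mem_Icc] at ha
    simp only [c]
    rw [if_neg (by lia), if_pos (by lia), zero_sub, Nat.sub_sub_self (by lia)]
  have hsum : ∑ a ∈ Icc 1 (q - 1), (c a : ℝ) * Real.log (Real.Gamma (a / q)) = 0 := by
    rw [sum_Icc_eq_sum_Icc_half_add fun a ha => by simp [c, ha], ← hf]
    refine sum_congr rfl fun a ha => ?_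
    rw [hlow ha, hhigh ha]
    rw [mem_Icc] at ha
    have hq : (q : ℝ) ≠ 0 := Nat.cast_ne_zero.2 (by lia)
    rw [IntermediateField.smul_def, smul_eq_mul, logGammaOdd, Nat.cast_sub (by lia), sub_div,
      div_self hq]
    push_cast
    ring
  have hc := h (fun a => ((c a : ℝ) : ℂ)) (fun a => (mem_algebraicClosure_iff.1 (c a).2).algebraMap)
    (by exact_mod_cast congrArg Complex.ofReal hsum)
    a (Icc_subset_Icc_right (Nat.div_le_self _ _) ha)
  rw [hlow ha] at hc
  exact_mod_cast hc

theorem stieltjes_transcendental_general (q : ℕ)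
    (h : LinearIndepOn (algebraicClosure ℚ ℝ) (fun a : ℕ => logGammaOdd (a / q))
      (Icc 1 ((q - 1) / 2)))
    (γ : ℕ → ℝ) (hγ : ∀ a ∈ Icc 1 (q - 1), IsFirstStieltjesConstant q a (γ a)) :
    (q - 5) / 2 ≤ {a | a ∈ Icc 1 (q - 1) ∧ Transcendental ℚ (γ a)}.ncard := by
  classical
  have halg := card_filter_isAlgebraic_firstStieltjesConstant_sub_le h hγ
  have htrans := card_filter_not_isAlgebraic_sub_le_ncard q γ
  have hcard := card_filter_add_card_filter_not (s := Icc 1 ((q - 1) / 2))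
    fun a => IsAlgebraic ℚ (γ a - γ (q - a))
  rw [Nat.card_Icc] at hcard
  lia

/-- Corollary 2: for a prime `p > 7`, assuming Q̄-linear independence of
`{log Γ(a/p) : 1 ≤ a ≤ p-1}`, at least `(p-7)/2` of the generalized Stieltjes
constants `γ_1(a,p)`, `1 ≤ a ≤ p-1`, are transcendental. -/
theorem stieltjes_transcendental (p : ℕ) (hp : p.Prime) (hp7 : 7 < p)
    (hconj : ∀ c : ℕ → ℂ, (∀ a, IsAlgebraic ℚ (c a)) →
      (∑ a ∈ Finset.Icc 1 (p - 1),
        c a * (Real.log (Real.Gamma ((a : ℝ) / p)) : ℂ)) = 0 →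
      ∀ a ∈ Finset.Icc 1 (p - 1), c a = 0)
    (γ : ℕ → ℝ)
    (hγ : ∀ a ∈ Finset.Icc 1 (p - 1), Tendsto (fun x : ℝ =>
      (∑ n ∈ (Finset.Icc 1 ⌊x⌋₊).filter (fun n => n % p = a % p),
        Real.log n / n) - (Real.log x) ^ 2 / (2 * p)) atTop (𝓝 (γ a))) :
    (p - 7) / 2 ≤ {a : ℕ | a ∈ Finset.Icc 1 (p - 1) ∧ Transcendental ℚ (γ a)}.ncard := by
  exact (Nat.div_le_div_right (by lia)).trans
    (stieltjes_transcendental_general p (linearIndepOn_logGammaOdd hconj) γ hγ)
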